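/- Let 1/3 < λ < 1, let b, σ ∈ C_b^∞(ℝ;ℝ) with inf σ > 0, and for g ∈ C^λ₀([0,1];ℝ) and ξ ∈ ℝ let x_·(ξ,g) be the Doss–Sussmann solution. Fix m ∈ ℕ and let τ_k = k·2^{−m} for k = 0,…,2^m. Then for every ξ ∈ ℝ, every g ∈ C^λ₀([0,1];ℝ) and every choice of target values ξ₁,…,ξ_{2^m} ∈ ℝ (in particular, the values of the Crank–Nicolson approximation along the dyadic partition), there exist unique real numbers κ₁,…,κ_{2^m} such that x_{τ_k}(ξ, g + h) = ξ_k for all k = 1,…,2^m, where h : [0,1] → ℝ is the piecewise linear function with h(0) = 0 which is affine on each interval [τ_{k−1},τ_k] with h(τ_k) − h(τ_{k−1}) = κ_k. -/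

import Mathlib

/-- `f` is in `C_b^∞(ℝ;ℝ)`. -/
def CbInf (f : ℝ → ℝ) : Prop :=
  ContDiff ℝ (⊤ : ℕ∞) f ∧ ∀ i : ℕ, ∃ M : ℝ, ∀ x : ℝ, |iteratedDeriv i f x| ≤ M

/-- `f_{σ,b}(x,y) = exp(−∫₀^y σ'(φ(x,η))dη) · b(φ(x,y))`. -/
noncomputable def fsb (b σ : ℝ → ℝ) (φ : ℝ → ℝ → ℝ) (x y : ℝ) : ℝ :=
  Real.exp (-(∫ η in (0:ℝ)..y, deriv σ (φ x η))) * b (φ x y)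

/-- The piecewise linear path on `[0,1]`, vanishing at `0`, affine on each dyadic interval
`[τ_{k-1}, τ_k]` with `τ_k = k·2^{−m}`, whose increment on the `(i+1)`-st interval is `κ i`. -/
noncomputable def pwl (m : ℕ) (κ : Fin (2 ^ m) → ℝ) (t : ℝ) : ℝ :=
  ∑ i : Fin (2 ^ m), κ i * min (max (t * (2:ℝ) ^ m - ((i : ℕ) : ℝ)) 0) 1

open Set Filter Topology MeasureTheory

/-- A function solving `u β = α + ∫₀^β h (u η) dη` with `h` continuous and bounded is continuous;
in particular the integrand is automatically integrable. -/
theorem continuous_of_eq_add_integral_comp {h u : ℝ → ℝ} {α M : ℝ} (hh : Continuous h)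
    (hM : ∀ x, |h x| ≤ M) (hu : ∀ β, u β = α + ∫ η in (0:ℝ)..β, h (u η)) : Continuous u := by
  set S : Set ℝ := {β | IntervalIntegrable (fun η => h (u η)) volume 0 β}
  have hlip : ∀ β ∈ S, ∀ γ ∈ S, |u β - u γ| ≤ M * |β - γ| := by
    intro β hβ γ hγ
    have : u β - u γ = ∫ η in γ..β, h (u η) := by
      rw [hu β, hu γ, ← intervalIntegral.integral_interval_sub_left hβ hγ]
      ring
    rw [this]
    exact intervalIntegral.norm_integral_le_of_norm_le_const (f := fun η => h (u η))
      fun x _ => hM (u x)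
  have hM0 : 0 ≤ M := (abs_nonneg _).trans (hM 0)
  have hcont : ContinuousOn u S := by
    have : LipschitzOnWith M.toNNReal u S := by
      refine LipschitzOnWith.of_dist_le_mul fun x hx y hy => ?_
      rw [Real.dist_eq, Real.dist_eq, Real.coe_toNNReal _ hM0]
      exact hlip x hx y hy
    exact this.continuousOn
  have hord : S.OrdConnected := by
    refine ⟨fun x hx z hz y hy => ?_⟩
    rcases le_total 0 y with h0 | h0
    · refine IntervalIntegrable.mono_set hz ?_
      rw [uIcc_of_le h0, uIcc_of_le (h0.trans hy.2)]
      exact Icc_subset_Icc_right hy.2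
    · refine IntervalIntegrable.mono_set hx ?_
      rw [uIcc_of_ge h0, uIcc_of_ge (hy.1.trans h0)]
      exact Icc_subset_Icc_left hy.1
  have hmeas : Measurable u := by
    classical
    have : u = S.piecewise u (fun _ => α) := by
      funext β
      by_cases hβ : β ∈ S
      · simp [hβ]
      · rw [piecewise_eq_of_notMem _ _ _ hβ, hu β, intervalIntegral.integral_undef hβ, add_zero]
    rw [this]
    exact hcont.measurable_piecewise continuousOn_const hord.measurableSet
  have huniv : S = univ := by
    refine eq_univ_of_forall fun β => ?_
    refine (intervalIntegrable_const (c := M)).mono_fun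
      (hh.measurable.comp hmeas).aestronglyMeasurable ?_
    refine Eventually.of_forall fun x => ?_
    simpa [abs_of_nonneg hM0] using hM (u x)
  rw [huniv] at hcont
  exact continuousOn_univ.mp hcont

theorem CbInf.continuous {f : ℝ → ℝ} (hf : CbInf f) : Continuous f := hf.1.continuous

theorem CbInf.differentiable {f : ℝ → ℝ} (hf : CbInf f) : Differentiable ℝ f :=
  hf.1.differentiable (by simp)

theorem CbInf.continuous_deriv {f : ℝ → ℝ} (hf : CbInf f) : Continuous (deriv f) :=
  hf.1.continuous_deriv (by exact_mod_cast le_top)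

theorem CbInf.exists_bound {f : ℝ → ℝ} (hf : CbInf f) : ∃ M, ∀ x, |f x| ≤ M := by
  simpa using hf.2 0

theorem CbInf.exists_lipschitz {f : ℝ → ℝ} (hf : CbInf f) :
    ∃ K, ∀ x y, |f x - f y| ≤ K * |x - y| := by
  obtain ⟨K, hK⟩ := hf.2 1
  simp only [iteratedDeriv_one] at hK
  exact ⟨K, fun x y => convex_univ.norm_image_sub_le_of_norm_deriv_le
    (fun z _ => hf.differentiable z) (fun z _ => hK z) (mem_univ y) (mem_univ x)⟩

theorem CbInf.exists_lipschitz_div {b σ : ℝ → ℝ} (hb : CbInf b) (hσ : CbInf σ) {c : ℝ} (hc : 0 < c)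
    (hcσ : ∀ x, c ≤ σ x) : ∃ K, ∀ x y, |b x / σ x - b y / σ y| ≤ K * |x - y| := by
  obtain ⟨Mb, hMb⟩ := hb.exists_bound
  obtain ⟨Kb, hKb⟩ := hb.exists_lipschitz
  obtain ⟨Kσ, hKσ⟩ := hσ.exists_lipschitz
  refine ⟨Kb / c + Mb * Kσ / (c * c), fun x y => ?_⟩
  have hx : 0 < σ x := hc.trans_le (hcσ x)
  have hy : 0 < σ y := hc.trans_le (hcσ y)
  have hMb0 : 0 ≤ Mb := (abs_nonneg _).trans (hMb 0)
  have key : b x / σ x - b y / σ y = (b x - b y) / σ x + b y * (σ y - σ x) / (σ x * σ y) := by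
    field_simp
    ring
  rw [key]
  refine (abs_add_le _ _).trans ?_
  rw [abs_div, abs_div, abs_mul, abs_mul, abs_of_pos hx, abs_of_pos hy, add_mul]
  refine add_le_add ?_ ?_
  · rw [div_mul_eq_mul_div]
    exact div_le_div₀ ((abs_nonneg _).trans (hKb x y)) (hKb x y) hc (hcσ x)
  · rw [div_mul_eq_mul_div, mul_assoc]
    have h1 : |σ y - σ x| ≤ Kσ * |x - y| := by
      rw [abs_sub_comm]
      exact hKσ x y
    refine div_le_div₀ (mul_nonneg hMb0 ((abs_nonneg _).trans h1)) ?_ (by positivity) ?_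
    · exact mul_le_mul (hMb y) h1 (abs_nonneg _) hMb0
    · exact mul_le_mul (hcσ x) (hcσ y) hc.le hx.le

/-- The Lamperti transform `x ↦ ∫₀^x dη / σ(η)`. -/
noncomputable def lamperti (σ : ℝ → ℝ) (x : ℝ) : ℝ := ∫ η in (0:ℝ)..x, (σ η)⁻¹

section Lamperti

variable {σ : ℝ → ℝ}

theorem hasDerivAt_lamperti (hσ : Continuous σ) (hpos : ∀ x, 0 < σ x) (x : ℝ) :
    HasDerivAt (lamperti σ) (σ x)⁻¹ x :=
  ((hσ.inv₀ fun x => (hpos x).ne').integral_hasStrictDerivAt 0 x).hasDerivAt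

theorem continuous_lamperti (hσ : Continuous σ) (hpos : ∀ x, 0 < σ x) : Continuous (lamperti σ) :=
  continuous_iff_continuousAt.2 fun x => (hasDerivAt_lamperti hσ hpos x).continuousAt

theorem strictMono_lamperti (hσ : Continuous σ) (hpos : ∀ x, 0 < σ x) :
    StrictMono (lamperti σ) := by
  refine strictMono_of_deriv_pos fun x => ?_
  rw [(hasDerivAt_lamperti hσ hpos x).deriv]
  exact inv_pos.2 (hpos x)

theorem abs_sub_le_mul_lamperti (hσ : Continuous σ) (hpos : ∀ x, 0 < σ x) {M : ℝ}
    (hle : ∀ x, σ x ≤ M) (x y : ℝ) : |x - y| ≤ M * |lamperti σ x - lamperti σ y| := by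
  have hmono : Monotone fun x => M * lamperti σ x - x := by
    have hd : ∀ x, HasDerivAt (fun x => M * lamperti σ x - x) (M * (σ x)⁻¹ - 1) x := fun x =>
      ((hasDerivAt_lamperti hσ hpos x).const_mul M).sub (hasDerivAt_id x)
    refine monotone_of_deriv_nonneg (fun x => (hd x).differentiableAt) fun x => ?_
    rw [(hd x).deriv, sub_nonneg, ← div_eq_mul_inv, one_le_div (hpos x)]
    exact hle x
  wlog hxy : y ≤ x generalizing x y
  · rw [abs_sub_comm, abs_sub_comm (lamperti σ x)]
    exact this y x (le_of_not_ge hxy)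
  have h1 := hmono hxy
  have h2 := (strictMono_lamperti hσ hpos).monotone hxy
  simp only at h1
  rw [abs_of_nonneg (sub_nonneg.2 hxy), abs_of_nonneg (sub_nonneg.2 h2)]
  linarith

theorem isInducing_lamperti (hσ : Continuous σ) (hpos : ∀ x, 0 < σ x) {M : ℝ}
    (hle : ∀ x, σ x ≤ M) : IsInducing (lamperti σ) := by
  refine isInducing_iff_nhds.2 fun x => le_antisymm
    (continuous_lamperti hσ hpos).continuousAt.le_comap ?_
  have : Tendsto (fun y : ℝ => y) (comap (lamperti σ) (𝓝 (lamperti σ x))) (𝓝 x) := by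
    rw [tendsto_iff_dist_tendsto_zero]
    have h0 : Tendsto (fun y => M * |lamperti σ y - lamperti σ x|)
        (comap (lamperti σ) (𝓝 (lamperti σ x))) (𝓝 0) := by
      have : Tendsto (fun z : ℝ => M * |z - lamperti σ x|) (𝓝 (lamperti σ x)) (𝓝 0) := by
        have hc : Continuous fun z : ℝ => M * |z - lamperti σ x| := by fun_prop
        simpa using hc.tendsto (lamperti σ x)
      exact this.comp tendsto_comap
    exact squeeze_zero (fun _ => dist_nonneg)
      (fun y => abs_sub_le_mul_lamperti hσ hpos hle y x) h0
  exact this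

variable {φ : ℝ → ℝ → ℝ} {M : ℝ}

theorem flow_hasDerivAt (hσ : Continuous σ) (hM : ∀ x, |σ x| ≤ M)
    (hφ : ∀ α β : ℝ, φ α β = α + ∫ η in (0:ℝ)..β, σ (φ α η)) (α β : ℝ) :
    HasDerivAt (φ α) (σ (φ α β)) β := by
  have hc : Continuous (φ α) := continuous_of_eq_add_integral_comp hσ hM (hφ α)
  have h := ((hσ.comp hc).integral_hasStrictDerivAt 0 β).hasDerivAt.const_add α
  exact h.congr_of_eventuallyEq (Eventually.of_forall (hφ α))

theorem lamperti_flow (hσ : Continuous σ) (hpos : ∀ x, 0 < σ x) (hM : ∀ x, |σ x| ≤ M)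
    (hφ : ∀ α β : ℝ, φ α β = α + ∫ η in (0:ℝ)..β, σ (φ α η)) (α β : ℝ) :
    lamperti σ (φ α β) = lamperti σ α + β := by
  have hd : ∀ β, HasDerivAt (fun β => lamperti σ (φ α β) - β) 0 β := fun β => by
    have h := ((hasDerivAt_lamperti hσ hpos (φ α β)).comp β (flow_hasDerivAt hσ hM hφ α β)).sub
      (hasDerivAt_id β)
    rwa [inv_mul_cancel₀ (hpos _).ne', sub_self] at h
  have h := is_const_of_deriv_eq_zero (fun x => (hd x).differentiableAt) (fun x => (hd x).deriv) β 0
  have h0 : φ α 0 = α := by rw [hφ]; simp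
  simp only [h0, sub_zero] at h
  linarith

theorem fsb_eq (b : ℝ → ℝ) (hσ : CbInf σ) (hpos : ∀ x, 0 < σ x)
    (hφ : ∀ α β : ℝ, φ α β = α + ∫ η in (0:ℝ)..β, σ (φ α η)) (x y : ℝ) :
    fsb b σ φ x y = σ x * (b (φ x y) / σ (φ x y)) := by
  obtain ⟨M, hM⟩ := hσ.exists_bound
  have hc : Continuous (φ x) := continuous_of_eq_add_integral_comp hσ.continuous hM (hφ x)
  have hd : ∀ η, HasDerivAt (fun η => Real.log (σ (φ x η))) (deriv σ (φ x η)) η := fun η => by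
    have h := (((hσ.differentiable (φ x η)).hasDerivAt).comp η
      (flow_hasDerivAt hσ.continuous hM hφ x η)).log (hpos _).ne'
    rwa [Function.comp_apply, mul_div_cancel_right₀ _ (hpos (φ x η)).ne'] at h
  have h0 : φ x 0 = x := by rw [hφ]; simp
  rw [fsb, intervalIntegral.integral_eq_sub_of_hasDerivAt (fun η _ => hd η)
    ((hσ.continuous_deriv.comp hc).intervalIntegrable _ _), h0, neg_sub, Real.exp_sub,
    Real.exp_log (hpos _), Real.exp_log (hpos _)]
  ring

end Lamperti

section PiecewiseLinear

variable {m : ℕ}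

theorem continuous_pwl (κ : Fin (2 ^ m) → ℝ) : Continuous (pwl m κ) := by
  unfold pwl
  fun_prop

theorem pwl_zero (κ : Fin (2 ^ m) → ℝ) : pwl m κ 0 = 0 := by
  refine Finset.sum_eq_zero fun i _ => ?_
  have : max (0 * (2:ℝ) ^ m - ((i : ℕ) : ℝ)) 0 = 0 := by simp
  rw [this]
  simp

theorem pwl_sub_pwl_eq_single {κ κ' : Fin (2 ^ m) → ℝ} (n : Fin (2 ^ m)) {t : ℝ}
    (hlt : ∀ i < n, κ i = κ' i) (hgt : ∀ i > n, κ i = κ' i ∨ t * 2 ^ m ≤ ((i : ℕ) : ℝ)) :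
    pwl m κ t - pwl m κ' t
      = (κ n - κ' n) * min (max (t * (2:ℝ) ^ m - ((n : ℕ) : ℝ)) 0) 1 := by
  unfold pwl
  rw [← Finset.sum_sub_distrib, Finset.sum_eq_single n]
  · ring
  · intro i _ hi
    rcases lt_or_gt_of_ne hi with h | h
    · rw [hlt i h, sub_self]
    · rcases hgt i h with h' | h'
      · rw [h', sub_self]
      · rw [max_eq_right (by linarith)]
        simp
  · simp

theorem pwl_sub_pwl_of_agree {κ κ' : Fin (2 ^ m) → ℝ} {n : Fin (2 ^ m)} {t : ℝ}
    (hlt : ∀ i < n, κ i = κ' i) (h0 : ((n : ℕ) : ℝ) / 2 ^ m ≤ t)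
    (h1 : t ≤ (((n : ℕ) : ℝ) + 1) / 2 ^ m) :
    pwl m κ t - pwl m κ' t = (κ n - κ' n) * (t * (2:ℝ) ^ m - ((n : ℕ) : ℝ)) := by
  have hN : (0:ℝ) < 2 ^ m := by positivity
  rw [div_le_iff₀ hN] at h0
  rw [le_div_iff₀ hN] at h1
  rw [pwl_sub_pwl_eq_single n hlt, max_eq_left (by linarith), min_eq_left (by linarith)]
  intro i hi
  right
  have : ((n : ℕ) : ℝ) + 1 ≤ ((i : ℕ) : ℝ) := by exact_mod_cast hi
  linarith

theorem pwl_eq_of_agree {κ κ' : Fin (2 ^ m) → ℝ} {n : ℕ} {t : ℝ}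
    (hlt : ∀ i : Fin (2 ^ m), (i : ℕ) < n → κ i = κ' i) (h1 : t ≤ (n : ℝ) / 2 ^ m) :
    pwl m κ t = pwl m κ' t := by
  have hN : (0:ℝ) < 2 ^ m := by positivity
  rw [le_div_iff₀ hN] at h1
  refine Finset.sum_congr rfl fun i _ => ?_
  rcases lt_or_ge (i : ℕ) n with h | h
  · rw [hlt i h]
  · have : (n : ℝ) ≤ ((i : ℕ) : ℝ) := by exact_mod_cast h
    rw [max_eq_right (by linarith)]
    simp

end PiecewiseLinear

section Comparison

variable {W₁ W₂ V₁ V₂ p₁ p₂ : ℝ → ℝ} {L : ℝ}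

theorem abs_sub_le_gronwallBound {T ε : ℝ} (hL : 0 ≤ L)
    (hc₁ : ContinuousOn W₁ (Icc 0 T)) (hc₂ : ContinuousOn W₂ (Icc 0 T))
    (hd₁ : ∀ t ∈ Ico 0 T, HasDerivWithinAt W₁ (V₁ t) (Ici t) t)
    (hd₂ : ∀ t ∈ Ico 0 T, HasDerivWithinAt W₂ (V₂ t) (Ici t) t)
    (h0 : W₁ 0 = W₂ 0)
    (hV : ∀ t ∈ Ico 0 T, |V₁ t - V₂ t| ≤ L * |(W₁ t + p₁ t) - (W₂ t + p₂ t)|)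
    (hp : ∀ t ∈ Ico 0 T, |p₁ t - p₂ t| ≤ ε) {t : ℝ} (ht : t ∈ Icc 0 T) :
    |W₁ t - W₂ t| ≤ gronwallBound 0 L (L * ε) t := by
  have h := norm_le_gronwallBound_of_norm_deriv_right_le (f := fun t => W₁ t - W₂ t)
    (f' := fun t => V₁ t - V₂ t) (δ := 0) (K := L) (ε := L * ε) (hc₁.sub hc₂)
    (fun x hx => (hd₁ x hx).sub (hd₂ x hx)) (by simp [h0]) ?_ t ht
  · simpa using h
  · intro x hx
    rw [← mul_add]
    refine (hV x hx).trans (mul_le_mul_of_nonneg_left ?_ hL)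
    calc |W₁ x + p₁ x - (W₂ x + p₂ x)| = |(W₁ x - W₂ x) + (p₁ x - p₂ x)| := by ring_nf
      _ ≤ |W₁ x - W₂ x| + |p₁ x - p₂ x| := abs_add_le _ _
      _ ≤ _ := add_le_add le_rfl (hp x hx)

/-- If two paths start together and the forcing difference has constant positive slope `δ`,
then the paths are strictly ordered at any later time. -/
theorem lt_of_forcing_slope_pos {s e δ : ℝ} (hL : 0 ≤ L) (hse : s < e) (hδ : 0 < δ)
    (hc₁ : ContinuousOn W₁ (Icc s e)) (hc₂ : ContinuousOn W₂ (Icc s e))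
    (hd₁ : ∀ t ∈ Ico s e, HasDerivWithinAt W₁ (V₁ t) (Ici t) t)
    (hd₂ : ∀ t ∈ Ico s e, HasDerivWithinAt W₂ (V₂ t) (Ici t) t)
    (h0 : W₁ s = W₂ s)
    (hV : ∀ t ∈ Ico s e, |V₁ t - V₂ t| ≤ L * |(W₁ t + p₁ t) - (W₂ t + p₂ t)|)
    (hp : ∀ t ∈ Icc s e, p₁ t - p₂ t = δ * (t - s)) :
    W₂ e + p₂ e < W₁ e + p₁ e := by
  set ε : ℝ := δ / (2 + L * (e - s))
  have hden : 0 < 2 + L * (e - s) := by nlinarith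
  have hε0 : 0 < ε := div_pos hδ hden
  have hεδ : ε * (2 + L * (e - s)) = δ := div_mul_cancel₀ _ hden.ne'
  have h := image_le_of_deriv_right_lt_deriv_boundary
    (f := fun t => W₂ t - W₁ t - δ * (t - s)) (f' := fun t => V₂ t - V₁ t - δ)
    (a := s) (b := e) (B := fun t => -ε * (t - s)) (B' := fun _ => -ε)
    ((hc₂.sub hc₁).sub (by fun_prop)) ?_ (by simp [h0]) ?_ ?_ (right_mem_Icc.2 hse.le)
  · have := hp e (right_mem_Icc.2 hse.le)
    have : 0 < ε * (e - s) := mul_pos hε0 (sub_pos.2 hse)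
    linarith
  · intro x hx
    refine ((hd₂ x hx).sub (hd₁ x hx)).sub ?_
    simpa using (((hasDerivAt_id x).sub_const s).const_mul δ).hasDerivWithinAt
  · intro x
    simpa using ((hasDerivAt_id x).sub_const s).const_mul (-ε)
  · intro x hx hfx
    have h1 := hp x (Ico_subset_Icc_self hx)
    have h2 := hV x hx
    have h3 : W₁ x + p₁ x - (W₂ x + p₂ x) = ε * (x - s) := by linarith
    rw [h3, abs_of_nonneg (mul_nonneg hε0.le (sub_nonneg.2 hx.1))] at h2
    have h4 := (abs_le.1 h2).1
    have h5 : L * (ε * (x - s)) ≤ L * (ε * (e - s)) := by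
      have := hx.2.le
      gcongr
    nlinarith

end Comparison

section Shooting

variable {m : ℕ} {W V : (Fin (2 ^ m) → ℝ) → ℝ → ℝ} {g : ℝ → ℝ} {w₀ L R : ℝ}

/-- Unique solvability of the shooting problem for forced equations `W' = V` on `[0,1]`
whose right-hand side is bounded and Lipschitz in the forced path `W + g + pwl m κ`. -/
theorem existsUnique_shooting (hL : 0 ≤ L)
    (hc : ∀ κ, ContinuousOn (W κ) (Icc 0 1)) (h0 : ∀ κ, W κ 0 = w₀)
    (hd : ∀ κ, ∀ t ∈ Ico (0:ℝ) 1, HasDerivWithinAt (W κ) (V κ t) (Ici t) t)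
    (hR : ∀ κ t, |V κ t| ≤ R)
    (hV : ∀ κ κ', ∀ t ∈ Ico (0:ℝ) 1, |V κ t - V κ' t|
      ≤ L * |(W κ t + (g t + pwl m κ t)) - (W κ' t + (g t + pwl m κ' t))|)
    (ζ : Fin (2 ^ m) → ℝ) :
    ∃! κ : Fin (2 ^ m) → ℝ, ∀ k : Fin (2 ^ m),
      W κ ((((k : ℕ) : ℝ) + 1) / (2:ℝ) ^ m) + (g ((((k : ℕ) : ℝ) + 1) / (2:ℝ) ^ m)
        + pwl m κ ((((k : ℕ) : ℝ) + 1) / (2:ℝ) ^ m)) = ζ k := by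
  have hN : (0:ℝ) < 2 ^ m := by positivity
  have hle : ∀ n : ℕ, n ≤ 2 ^ m → (n : ℝ) / 2 ^ m ≤ 1 := fun n hn => by
    rw [div_le_one hN]
    exact_mod_cast hn
  have hτ : ∀ k : Fin (2 ^ m), (((k : ℕ) : ℝ) + 1) / (2:ℝ) ^ m ∈ Icc (0:ℝ) 1 := fun k =>
    ⟨by positivity, by exact_mod_cast hle (k + 1) k.2⟩
  have agree : ∀ {κ κ' : Fin (2 ^ m) → ℝ} {n : ℕ}, n ≤ 2 ^ m →
      (∀ i : Fin (2 ^ m), (i : ℕ) < n → κ i = κ' i) →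
      ∀ t ∈ Icc (0:ℝ) (n / 2 ^ m), W κ t = W κ' t := by
    intro κ κ' n hn hκ t ht
    have hT := hle n hn
    have h := abs_sub_le_gronwallBound (ε := 0) (T := n / 2 ^ m) hL
      ((hc κ).mono (Icc_subset_Icc_right hT)) ((hc κ').mono (Icc_subset_Icc_right hT))
      (fun t ht => hd κ t ⟨ht.1, ht.2.trans_le hT⟩) (fun t ht => hd κ' t ⟨ht.1, ht.2.trans_le hT⟩)
      ((h0 κ).trans (h0 κ').symm) (fun t ht => hV κ κ' t ⟨ht.1, ht.2.trans_le hT⟩)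
      (fun t ht => by rw [pwl_eq_of_agree hκ ht.2.le]; simp) ht
    rw [mul_zero, gronwallBound_ε0_δ0] at h
    exact sub_eq_zero.1 (abs_nonpos_iff.1 h)
  have exists_upto : ∀ n : ℕ, n ≤ 2 ^ m → ∃ κ : Fin (2 ^ m) → ℝ, ∀ k : Fin (2 ^ m), (k : ℕ) < n →
      W κ ((((k : ℕ) : ℝ) + 1) / (2:ℝ) ^ m) + (g ((((k : ℕ) : ℝ) + 1) / (2:ℝ) ^ m)
        + pwl m κ ((((k : ℕ) : ℝ) + 1) / (2:ℝ) ^ m)) = ζ k := by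
    intro n
    induction n with
    | zero => exact fun _ => ⟨0, fun k hk => absurd hk (Nat.not_lt_zero _)⟩
    | succ n ih =>
      intro hn
      obtain ⟨κ, hκ⟩ := ih (Nat.le_of_succ_le hn)
      set j : Fin (2 ^ m) := ⟨n, hn⟩ with hj
      set T : ℝ := (((j : ℕ) : ℝ) + 1) / (2:ℝ) ^ m with hT
      set K : ℝ → Fin (2 ^ m) → ℝ := fun s => Function.update κ j s with hK
      have hKsub : ∀ s s' t, pwl m (K s) t - pwl m (K s') t
          = (s - s') * min (max (t * (2:ℝ) ^ m - ((j : ℕ) : ℝ)) 0) 1 := by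
        intro s s' t
        rw [pwl_sub_pwl_eq_single j]
        · simp [hK]
        · intro i hi
          simp [hK, hi.ne]
        · intro i hi
          simp [hK, hi.ne']
      have hKT : ∀ s s', pwl m (K s) T - pwl m (K s') T = s - s' := by
        intro s s'
        rw [hKsub, hT, div_mul_cancel₀ _ hN.ne']
        simp
      have hKle : ∀ s s' t, |pwl m (K s) t - pwl m (K s') t| ≤ |s - s'| := by
        intro s s' t
        rw [hKsub, abs_mul,
          abs_of_nonneg (a := min _ _) (le_min (le_max_right _ _) zero_le_one)]
        exact mul_le_of_le_one_right (abs_nonneg _) (min_le_right _ _)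
      have hcont : Continuous fun s => W (K s) T + (g T + pwl m (K s) T) := by
        refine continuous_iff_continuousAt.2 fun s₀ => ?_
        refine tendsto_iff_dist_tendsto_zero.2 ?_
        have hlim : Tendsto (fun s => gronwallBound 0 L (L * |s - s₀|) T + |s - s₀|) (𝓝 s₀)
            (𝓝 0) := by
          have hcg : Continuous fun s => gronwallBound 0 L (L * |s - s₀|) T + |s - s₀| :=
            ((gronwallBound_continuous_ε 0 L T).comp (by fun_prop)).add (by fun_prop)
          simpa [gronwallBound_ε0_δ0] using hcg.tendsto s₀
        refine squeeze_zero (fun _ => dist_nonneg) (fun s => ?_) hlim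
        have hW := abs_sub_le_gronwallBound hL (hc (K s)) (hc (K s₀)) (hd (K s)) (hd (K s₀))
          ((h0 _).trans (h0 _).symm) (hV (K s) (K s₀)) (ε := |s - s₀|)
          (fun t _ => by simpa using hKle s s₀ t) (hτ j)
        rw [Real.dist_eq]
        calc _ = |(W (K s) T - W (K s₀) T) + (pwl m (K s) T - pwl m (K s₀) T)| := by ring_nf
          _ ≤ |W (K s) T - W (K s₀) T| + |pwl m (K s) T - pwl m (K s₀) T| := abs_add_le _ _
          _ ≤ _ := add_le_add hW (hKle s s₀ T)
      have hWb : ∀ s, |W (K s) T - w₀| ≤ R := by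
        intro s
        have h := norm_image_sub_le_of_norm_deriv_right_le_segment (hc (K s)) (hd (K s))
          (fun x _ => hR (K s) x) T (hτ j)
        rw [h0, sub_zero] at h
        exact h.trans (mul_le_of_le_one_right ((abs_nonneg _).trans (hR (K s) 0)) (hτ j).2)
      have hsurj : Function.Surjective fun s => W (K s) T + (g T + pwl m (K s) T) := by
        refine hcont.surjective ?_ ?_
        · refine tendsto_atTop_mono (f := fun s => s + (w₀ - R + g T + pwl m (K 0) T)) (fun s => ?_)
            (tendsto_atTop_add_const_right _ _ tendsto_id)
          have := hKT s 0
          have := (abs_le.1 (hWb s)).1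
          linarith
        · refine tendsto_atBot_mono (f := fun s => s + (w₀ + R + g T + pwl m (K 0) T)) (fun s => ?_)
            (tendsto_atBot_add_const_right _ _ tendsto_id)
          have := hKT s 0
          have := (abs_le.1 (hWb s)).2
          linarith
      obtain ⟨s, hs⟩ := hsurj (ζ j)
      refine ⟨K s, fun k hk => ?_⟩
      rcases Nat.lt_succ_iff_lt_or_eq.1 hk with hk | hk
      · have hag : ∀ i : Fin (2 ^ m), (i : ℕ) < n → K s i = κ i := fun i hi => by
          have : i ≠ j := fun h => by simp [h, hj] at hi
          simp [hK, this]
        have hkn : (((k : ℕ) : ℝ) + 1) / (2:ℝ) ^ m ≤ (n : ℝ) / 2 ^ m := by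
          gcongr
          exact_mod_cast hk
        rw [agree (Nat.le_of_succ_le hn) hag _ ⟨(hτ k).1, hkn⟩, pwl_eq_of_agree hag hkn]
        exact hκ k hk
      · have : k = j := Fin.ext hk
        rw [this]
        exact hs
  obtain ⟨κ, hκ⟩ := exists_upto (2 ^ m) le_rfl
  refine ⟨κ, fun k => hκ k k.2, fun κ' hκ' => ?_⟩
  have hstep : ∀ (κ κ' : Fin (2 ^ m) → ℝ) (n : Fin (2 ^ m)), (∀ i < n, κ i = κ' i) →
      κ' n < κ n →
      W κ' ((((n : ℕ) : ℝ) + 1) / (2:ℝ) ^ m) + (g ((((n : ℕ) : ℝ) + 1) / (2:ℝ) ^ m)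
        + pwl m κ' ((((n : ℕ) : ℝ) + 1) / (2:ℝ) ^ m))
      < W κ ((((n : ℕ) : ℝ) + 1) / (2:ℝ) ^ m) + (g ((((n : ℕ) : ℝ) + 1) / (2:ℝ) ^ m)
        + pwl m κ ((((n : ℕ) : ℝ) + 1) / (2:ℝ) ^ m)) := by
    intro κ κ' n hag hlt
    have hs0 : (0:ℝ) ≤ ((n : ℕ) : ℝ) / 2 ^ m := by positivity
    have he1 := (hτ n).2
    refine lt_of_forcing_slope_pos (p₁ := fun t => g t + pwl m κ t)
      (p₂ := fun t => g t + pwl m κ' t) (δ := (κ n - κ' n) * 2 ^ m) (s := ((n : ℕ) : ℝ) / 2 ^ m) hL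
      (by gcongr; linarith) (mul_pos (sub_pos.2 hlt) hN)
      ((hc κ).mono (Icc_subset_Icc hs0 he1)) ((hc κ').mono (Icc_subset_Icc hs0 he1))
      (fun t ht => hd κ t ⟨hs0.trans ht.1, ht.2.trans_le he1⟩)
      (fun t ht => hd κ' t ⟨hs0.trans ht.1, ht.2.trans_le he1⟩)
      (agree n.2.le hag _ ⟨hs0, le_rfl⟩)
      (fun t ht => hV κ κ' t ⟨hs0.trans ht.1, ht.2.trans_le he1⟩) fun t ht => ?_
    have h := pwl_sub_pwl_of_agree hag ht.1 ht.2
    have h2 : (2:ℝ) ^ m * (((n : ℕ) : ℝ) / 2 ^ m) = n := mul_div_cancel₀ _ hN.ne'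
    linear_combination h + (κ n - κ' n) * h2
  funext n
  induction n using WellFoundedLT.induction with
  | _ n ih =>
    rcases lt_trichotomy (κ' n) (κ n) with h | h | h
    · have := hstep κ κ' n (fun i hi => (ih i hi).symm) h
      rw [hκ n n.2, hκ' n] at this
      exact absurd this (lt_irrefl _)
    · exact h
    · have := hstep κ' κ n ih h
      rw [hκ n n.2, hκ' n] at this
      exact absurd this (lt_irrefl _)

end Shooting

/-- Right differentiability of the Lamperti transform of the auxiliary Doss–Sussmann path. -/
theorem hasDerivWithinAt_lamperti_aux {b σ : ℝ → ℝ} (hb : CbInf b) (hσ : CbInf σ)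
    (hpos : ∀ x, 0 < σ x) {φ : ℝ → ℝ → ℝ}
    (hφ : ∀ α β : ℝ, φ α β = α + ∫ η in (0:ℝ)..β, σ (φ α η)) {ξ : ℝ} {a y : ℝ → ℝ}
    (hy : ContinuousOn y (Icc 0 1)) (ha : ContinuousOn a (Icc 0 1))
    (hint : ∀ t ∈ Icc (0:ℝ) 1, a t = ξ + ∫ u in (0:ℝ)..t, fsb b σ φ (a u) (y u))
    {t : ℝ} (ht : t ∈ Ico (0:ℝ) 1) :
    HasDerivWithinAt (fun t => lamperti σ (a t)) (b (φ (a t) (y t)) / σ (φ (a t) (y t)))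
      (Ici t) t := by
  obtain ⟨M, hM⟩ := hσ.exists_bound
  have hφc : ContinuousOn (fun u => φ (a u) (y u)) (Icc 0 1) := by
    rw [(isInducing_lamperti hσ.continuous hpos
      fun x => (le_abs_self _).trans (hM x)).continuousOn_iff]
    refine (((continuous_lamperti hσ.continuous hpos).comp_continuousOn ha).add hy).congr
      fun u _ => ?_
    exact lamperti_flow hσ.continuous hpos hM hφ _ _
  have hfc : ContinuousOn (fun u => fsb b σ φ (a u) (y u)) (Icc 0 1) := by
    simp only [fsb_eq b hσ hpos hφ]
    exact (hσ.continuous.comp_continuousOn ha).mul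
      ((hb.continuous.comp_continuousOn hφc).div (hσ.continuous.comp_continuousOn hφc)
        fun u _ => (hpos _).ne')
  have hsub : Icc 0 t ⊆ Icc (0:ℝ) 1 := Icc_subset_Icc_right ht.2.le
  have hnhds : Icc (0:ℝ) 1 ∈ 𝓝[≥] t :=
    mem_of_superset (Icc_mem_nhdsGE ht.2) (Icc_subset_Icc_left ht.1)
  have hd : HasDerivWithinAt (fun v => ∫ u in (0:ℝ)..v, fsb b σ φ (a u) (y u))
      (fsb b σ φ (a t) (y t)) (Ici t) t := by
    refine intervalIntegral.integral_hasDerivWithinAt_right (t := Ioi t)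
      ((hfc.mono hsub).intervalIntegrable_of_Icc ht.1) ?_ ?_
    · exact ⟨Icc 0 1, nhdsWithin_mono _ Ioi_subset_Ici_self hnhds,
        hfc.aestronglyMeasurable measurableSet_Icc⟩
    · exact ((hfc t ⟨ht.1, ht.2.le⟩).mono_of_mem_nhdsWithin hnhds).mono Ioi_subset_Ici_self
  have hda : HasDerivWithinAt a (fsb b σ φ (a t) (y t)) (Ici t) t := by
    refine (hd.const_add ξ).congr_of_eventuallyEq ?_ (hint t ⟨ht.1, ht.2.le⟩)
    filter_upwards [hnhds] with u hu using hint u hu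
  have h := (hasDerivAt_lamperti hσ.continuous hpos (a t)).comp_hasDerivWithinAt t hda
  rwa [fsb_eq b hσ hpos hφ, inv_mul_cancel_left₀ (hpos _).ne'] at h

theorem continuousOn_of_abs_sub_le_rpow {g : ℝ → ℝ} {s : Set ℝ} {C lam : ℝ} (hlam : 0 < lam)
    (hg : ∀ x ∈ s, ∀ t ∈ s, |g t - g x| ≤ C * |t - x| ^ lam) : ContinuousOn g s := by
  intro x hx
  refine tendsto_iff_dist_tendsto_zero.2 ?_
  have hlim : Tendsto (fun t => C * |t - x| ^ lam) (𝓝[s] x) (𝓝 0) := by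
    have hc : Continuous fun t => C * |t - x| ^ lam :=
      continuous_const.mul ((by fun_prop : Continuous fun t => |t - x|).rpow_const
        fun _ => Or.inr hlam.le)
    have := hc.tendsto x
    rw [sub_self, abs_zero, Real.zero_rpow hlam.ne', mul_zero] at this
    exact this.mono_left nhdsWithin_le_nhds
  refine squeeze_zero' (Eventually.of_forall fun _ => dist_nonneg) ?_ hlim
  filter_upwards [self_mem_nhdsWithin] with t ht using hg x hx t ht

theorem stmt15
    (lam : ℝ) (hlam1 : 1/3 < lam) (hlam2 : lam < 1)
    (b σ : ℝ → ℝ) (hb : CbInf b) (hσ : CbInf σ)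
    (hσpos : ∃ c : ℝ, 0 < c ∧ ∀ x : ℝ, c ≤ σ x)
    (φ : ℝ → ℝ → ℝ) (hφ : ∀ α β : ℝ, φ α β = α + ∫ η in (0:ℝ)..β, σ (φ α η))
    -- `A ξ g` is the Doss–Sussmann auxiliary path for initial value `ξ` and driver `g`,
    -- so that `x_t(ξ,g) = φ(A ξ g t, g t)`
    (A : ℝ → (ℝ → ℝ) → ℝ → ℝ)
    (hA : ∀ (ξ : ℝ) (g : ℝ → ℝ), ContinuousOn g (Set.Icc 0 1) → g 0 = 0 →
      ContinuousOn (A ξ g) (Set.Icc 0 1) ∧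
      ∀ t ∈ Set.Icc (0:ℝ) 1, A ξ g t = ξ + ∫ u in (0:ℝ)..t, fsb b σ φ (A ξ g u) (g u))
    (m : ℕ) (ξ : ℝ)
    (g : ℝ → ℝ)
    (hg : ∃ Cg : ℝ, ∀ s ∈ Set.Icc (0:ℝ) 1, ∀ t ∈ Set.Icc (0:ℝ) 1,
      |g t - g s| ≤ Cg * |t - s| ^ lam)
    (hg0 : g 0 = 0)
    (ξs : Fin (2 ^ m) → ℝ) :
    ∃! κ : Fin (2 ^ m) → ℝ, ∀ k : Fin (2 ^ m),
      φ (A ξ (fun u => g u + pwl m κ u) ((((k : ℕ) : ℝ) + 1) / (2:ℝ) ^ m))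
          (g ((((k : ℕ) : ℝ) + 1) / (2:ℝ) ^ m)
            + pwl m κ ((((k : ℕ) : ℝ) + 1) / (2:ℝ) ^ m))
        = ξs k := by
  obtain ⟨c, hc, hcσ⟩ := hσpos
  obtain ⟨Cg, hCg⟩ := hg
  have hpos : ∀ x, 0 < σ x := fun x => hc.trans_le (hcσ x)
  obtain ⟨M, hM⟩ := hσ.exists_bound
  obtain ⟨Mb, hMb⟩ := hb.exists_bound
  obtain ⟨K, hK⟩ := hb.exists_lipschitz_div hσ hc hcσ
  have hM0 : 0 < M := (hpos 0).trans_le ((le_abs_self _).trans (hM 0))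
  have hK0 : 0 ≤ K := by simpa using (abs_nonneg _).trans (hK 1 0)
  have hgc : ContinuousOn g (Icc 0 1) := continuousOn_of_abs_sub_le_rpow (by linarith) hCg
  have hflow := lamperti_flow hσ.continuous hpos hM hφ
  have hyc : ∀ κ, ContinuousOn (fun u => g u + pwl m κ u) (Icc 0 1) := fun κ =>
    hgc.add (continuous_pwl κ).continuousOn
  have hAκ := fun κ => hA ξ (fun u => g u + pwl m κ u) (hyc κ) (by simp [hg0, pwl_zero])
  have key := existsUnique_shooting (m := m) (g := g) (w₀ := lamperti σ ξ) (L := K * M)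
    (R := Mb / c)
    (W := fun κ t => lamperti σ (A ξ (fun u => g u + pwl m κ u) t))
    (V := fun κ t => b (φ (A ξ (fun u => g u + pwl m κ u) t) (g t + pwl m κ t))
      / σ (φ (A ξ (fun u => g u + pwl m κ u) t) (g t + pwl m κ t)))
    (mul_nonneg hK0 hM0.le)
    (fun κ => (continuous_lamperti hσ.continuous hpos).comp_continuousOn (hAκ κ).1)
    (fun κ => by simp [(hAκ κ).2 0 (by simp)])
    (fun κ t ht => hasDerivWithinAt_lamperti_aux hb hσ hpos hφ (hyc κ) (hAκ κ).1 (hAκ κ).2 ht)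
    (fun κ t => by
      rw [abs_div, abs_of_pos (hpos _)]
      exact div_le_div₀ ((abs_nonneg _).trans (hMb 0)) (hMb _) hc (hcσ _))
    (fun κ κ' t _ => by
      rw [← hflow, ← hflow, mul_assoc]
      exact (hK _ _).trans (mul_le_mul_of_nonneg_left (abs_sub_le_mul_lamperti hσ.continuous hpos
        (fun x => (le_abs_self _).trans (hM x)) _ _) hK0))
    (fun k => lamperti σ (ξs k))
  simpa only [← hflow, (strictMono_lamperti hσ.continuous hpos).injective.eq_iff] using key
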